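/- Let x ∈ CGA₊ satisfy x + x̃ ∈ ℝ, x·x̃ ∈ ℝ, and x·(e₃₊+e₃₋) = (e₃₊+e₃₋)·x. Then x lies in the real span of {1, e₁₊+e₁₋, e₂₊+e₂₋, e₃₊+e₃₋} or x lies in the real span of {1, e₁₂, e₁₊+e₁₋, e₂₊+e₂₋}. -/

import Mathlib

open Polynomial

/-- The quadratic form of signature (4,1) on ℝ⁵ defining conformal geometric algebra. -/
noncomputable def Qcga : QuadraticForm ℝ (Fin 5 → ℝ) :=
  QuadraticMap.weightedSumSquares ℝ (fun i : Fin 5 => if (i : ℕ) = 4 then (-1 : ℝ) else 1)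

/-- Conformal geometric algebra CGA = Cl(4,1). -/
abbrev CGA := CliffordAlgebra Qcga

/-- The generators e₁, e₂, e₃, e₊, e₋ of CGA (indexed 0,…,4). -/
noncomputable def eCGA (i : Fin 5) : CGA := CliffordAlgebra.ι Qcga (Pi.single i 1)

/-- The real combination, with coefficients `c`, of the sixteen ordered words in `f 0, …, f 3`. -/
def wordSum {A : Type*} [Ring A] [Algebra ℝ A] (f : Fin 4 → A) (c : Fin 16 → ℝ) : A :=
  c 0 • 1 + c 1 • f 0 + c 2 • f 1 + c 3 • f 2 + c 4 • f 3
    + c 5 • (f 0 * f 1) + c 6 • (f 0 * f 2) + c 7 • (f 0 * f 3)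
    + c 8 • (f 1 * f 2) + c 9 • (f 1 * f 3) + c 10 • (f 2 * f 3)
    + c 11 • (f 0 * (f 1 * f 2)) + c 12 • (f 0 * (f 1 * f 3)) + c 13 • (f 0 * (f 2 * f 3))
    + c 14 • (f 1 * (f 2 * f 3)) + c 15 • (f 0 * (f 1 * (f 2 * f 3)))

theorem wordSum_add {A : Type*} [Ring A] [Algebra ℝ A] (f : Fin 4 → A) (c d : Fin 16 → ℝ) :
    wordSum f (c + d) = wordSum f c + wordSum f d := by
  simp only [wordSum, Pi.add_apply]
  module

theorem wordSum_smul {A : Type*} [Ring A] [Algebra ℝ A] (f : Fin 4 → A) (r : ℝ)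
    (c : Fin 16 → ℝ) : wordSum f (r • c) = r • wordSum f c := by
  simp only [wordSum, Pi.smul_apply, smul_eq_mul]
  module

theorem map_wordSum {A B : Type*} [Ring A] [Algebra ℝ A] [Ring B] [Algebra ℝ B] (φ : A →ₐ[ℝ] B)
    (f : Fin 4 → A) (c : Fin 16 → ℝ) : φ (wordSum f c) = wordSum (φ ∘ f) c := by
  simp [wordSum]

/-- Ordered words in anticommuting elements of squares `-1, -1, -1, 1` are stable under left
multiplication by each of these elements. -/
theorem exists_mul_wordSum {A : Type*} [Ring A] [Algebra ℝ A] (f : Fin 4 → A)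
    (hsq : ∀ i, f i * f i = if i = 3 then 1 else -1)
    (hanti : ∀ i j, i < j → f j * f i = -(f i * f j)) (i : Fin 4) (c : Fin 16 → ℝ) :
    ∃ d, f i * wordSum f c = wordSum f d := by
  have hsq' : ∀ i x, f i * (f i * x) = if i = 3 then x else -x := fun i x => by
    rw [← mul_assoc, hsq]; split_ifs <;> simp
  have hanti' : ∀ i j x, i < j → f j * (f i * x) = -(f i * (f j * x)) := fun i j x h => by
    rw [← mul_assoc, hanti i j h, neg_mul, mul_assoc]
  have a10 := hanti 0 1 (by decide)
  have a20 := hanti 0 2 (by decide)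
  have a30 := hanti 0 3 (by decide)
  have a21 := hanti 1 2 (by decide)
  have a31 := hanti 1 3 (by decide)
  have a32 := hanti 2 3 (by decide)
  have b10 := fun x => hanti' 0 1 x (by decide)
  have b20 := fun x => hanti' 0 2 x (by decide)
  have b30 := fun x => hanti' 0 3 x (by decide)
  have b21 := fun x => hanti' 1 2 x (by decide)
  have b31 := fun x => hanti' 1 3 x (by decide)
  have b32 := fun x => hanti' 2 3 x (by decide)
  refine ⟨(![![-c 1, c 0, -c 5, -c 6, -c 7, c 2, c 3, c 4, -c 11, -c 12, -c 13, c 8, c 9, c 10,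
      -c 15, c 14],
    ![-c 2, c 5, c 0, -c 8, -c 9, -c 1, c 11, c 12, c 3, c 4, -c 14, -c 6, -c 7, c 15, c 10, -c 13],
    ![-c 3, c 6, c 8, c 0, -c 10, -c 11, -c 1, c 13, -c 2, c 14, c 4, c 5, -c 15, -c 7, -c 9, c 12],
    ![c 4, -c 7, -c 9, -c 10, c 0, c 12, c 13, -c 1, c 14, -c 2, -c 3, -c 15, c 5, c 6, c 8,
      -c 11]] : Fin 4 → Fin 16 → ℝ) i, ?_⟩
  fin_cases i <;>
  · simp [wordSum, mul_add, hsq, hsq', a10, a20, a30, a21, a31, a32, b10, b20, b30, b21, b31, b32]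
    module

theorem Qcga_apply (v : Fin 5 → ℝ) :
    Qcga v = v 0 * v 0 + v 1 * v 1 + v 2 * v 2 + v 3 * v 3 - v 4 * v 4 := by
  simp [Qcga, QuadraticMap.weightedSumSquares_apply, Fin.sum_univ_five]
  ring

theorem eCGA_mul_self (i : Fin 5) : eCGA i * eCGA i = if i = 4 then -1 else 1 := by
  rw [eCGA, CliffordAlgebra.ι_sq_scalar, Qcga_apply]
  fin_cases i <;> simp

theorem eCGA_mul_eCGA {i j : Fin 5} (h : i ≠ j) : eCGA j * eCGA i = -(eCGA i * eCGA j) := by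
  apply CliffordAlgebra.ι_mul_ι_comm_of_isOrtho
  rw [QuadraticMap.isOrtho_def]
  simp only [Qcga_apply]
  fin_cases i <;> fin_cases j <;> simp at h ⊢

theorem ι_eq_sum_eCGA (v : Fin 5 → ℝ) : CliffordAlgebra.ι Qcga v = ∑ i, v i • eCGA i := by
  conv_lhs => rw [pi_eq_sum_univ' v]
  simp [eCGA]

/-- The generators `e₁eⱼ`, `j ≠ 1`, of the even subalgebra. -/
noncomputable def evenGen (i : Fin 4) : CGA := eCGA 0 * eCGA i.succ

theorem evenGen_mul (i j : Fin 4) : evenGen i * evenGen j = -(eCGA i.succ * eCGA j.succ) := by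
  rw [evenGen, evenGen, eCGA_mul_eCGA (Fin.succ_ne_zero i), neg_mul, mul_assoc,
    ← mul_assoc (eCGA 0), eCGA_mul_self]
  simp

theorem evenGen_mul_self (i : Fin 4) : evenGen i * evenGen i = if i = 3 then 1 else -1 := by
  rw [evenGen_mul, eCGA_mul_self]
  fin_cases i <;> simp

theorem evenGen_mul_evenGen (i j : Fin 4) (h : i < j) :
    evenGen j * evenGen i = -(evenGen i * evenGen j) := by
  rw [evenGen_mul, evenGen_mul, eCGA_mul_eCGA (by simpa using h.ne)]

theorem reverse_evenGen (i : Fin 4) : CliffordAlgebra.reverse (evenGen i) = -evenGen i := by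
  rw [evenGen, CliffordAlgebra.reverse.map_mul, eCGA, eCGA, CliffordAlgebra.reverse_ι,
    CliffordAlgebra.reverse_ι]
  exact eCGA_mul_eCGA (Fin.succ_ne_zero i).symm

theorem wordSum_evenGen_add_reverse (c : Fin 16 → ℝ) :
    wordSum evenGen c + CliffordAlgebra.reverse (wordSum evenGen c) =
      wordSum evenGen ![2 * c 0, 0, 0, 0, 0, 0, 0, 0, 0, 0, 0,
        2 * c 11, 2 * c 12, 2 * c 13, 2 * c 14, 2 * c 15] := by
  have h := evenGen_mul_evenGen
  have a10 := h 0 1 (by decide)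
  have a20 := h 0 2 (by decide)
  have a30 := h 0 3 (by decide)
  have a21 := h 1 2 (by decide)
  have a31 := h 1 3 (by decide)
  have a32 := h 2 3 (by decide)
  have b : ∀ i j x, i < j → evenGen j * (evenGen i * x) = -(evenGen i * (evenGen j * x)) :=
    fun i j x hij => by rw [← mul_assoc, h i j hij, neg_mul, mul_assoc]
  have b10 := fun x => b 0 1 x (by decide)
  have b20 := fun x => b 0 2 x (by decide)
  have b21 := fun x => b 1 2 x (by decide)
  simp [wordSum, CliffordAlgebra.reverse.map_mul, reverse_evenGen, mul_assoc,
    a10, a20, a30, a21, a31, a32, b10, b20, b21]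
  module

theorem exists_wordSum_of_mem_even (x : CGA) (hx : x ∈ CliffordAlgebra.even Qcga) :
    ∃ c, x = wordSum evenGen c := by
  have hmul : ∀ (a : ℝ) (v : Fin 4 → ℝ) (c : Fin 16 → ℝ),
      ∃ d, (a • 1 + ∑ i, v i • evenGen i) * wordSum evenGen c = wordSum evenGen d := by
    intro a v c
    choose d hd using fun i =>
      exists_mul_wordSum evenGen evenGen_mul_self evenGen_mul_evenGen i c
    refine ⟨a • c + v 0 • d 0 + v 1 • d 1 + v 2 • d 2 + v 3 • d 3, ?_⟩
    simp [wordSum_add, wordSum_smul, ← hd, Fin.sum_univ_four, add_mul, add_assoc]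
  have hleft : ∀ v : Fin 5 → ℝ, CliffordAlgebra.ι Qcga v =
      eCGA 0 * (v 0 • 1 + ∑ i, v (Fin.succ i) • evenGen i) := by
    intro v
    simp [ι_eq_sum_eCGA, Fin.sum_univ_succ, mul_add, evenGen, ← mul_assoc, eCGA_mul_self]
  have hright : ∀ v : Fin 5 → ℝ, CliffordAlgebra.ι Qcga v =
      (v 0 • 1 + ∑ i, (-v (Fin.succ i)) • evenGen i) * eCGA 0 := by
    intro v
    have h : ∀ i, evenGen i * eCGA 0 = -eCGA i.succ := fun i => by
      rw [evenGen, mul_assoc, eCGA_mul_eCGA (Fin.succ_ne_zero i).symm, mul_neg, ← mul_assoc,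
        eCGA_mul_self]
      simp
    simp [ι_eq_sum_eCGA, Fin.sum_univ_succ, add_mul, h]
    abel
  induction x, hx using CliffordAlgebra.even_induction with
  | algebraMap r =>
    exact ⟨Pi.single 0 r, by simp [wordSum, Algebra.algebraMap_eq_smul_one]⟩
  | add x y _ _ hx hy =>
    obtain ⟨c, rfl⟩ := hx
    obtain ⟨d, rfl⟩ := hy
    exact ⟨c + d, (wordSum_add _ c d).symm⟩
  | ι_mul_ι_mul u v x _ hx =>
    obtain ⟨c, rfl⟩ := hx
    obtain ⟨d, hd⟩ := hmul (v 0) (fun i => v i.succ) c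
    obtain ⟨d', hd'⟩ := hmul (u 0) (fun i => -u i.succ) d
    refine ⟨d', ?_⟩
    rw [hright u, hleft v, ← hd', ← hd]
    simp only [mul_assoc]
    rw [← mul_assoc (eCGA 0), eCGA_mul_self]
    simp

/-- The matrix of a vector in the representation of CGA by complex Dirac matrices. -/
noncomputable def diracLinear : (Fin 5 → ℝ) →ₗ[ℝ] Matrix (Fin 4) (Fin 4) ℂ where
  toFun v := !![(v 2 : ℂ), v 0 - Complex.I * v 1, v 3 + v 4, 0;
    v 0 + Complex.I * v 1, -v 2, 0, v 3 + v 4;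
    v 3 - v 4, 0, -v 2, -(v 0 - Complex.I * v 1);
    0, v 3 - v 4, -(v 0 + Complex.I * v 1), v 2]
  map_add' u v := by
    ext i j
    fin_cases i <;> fin_cases j <;> simp <;> ring
  map_smul' r v := by
    ext i j
    fin_cases i <;> fin_cases j <;> simp <;> ring

/-- The representation of CGA by complex Dirac matrices. -/
noncomputable def dirac : CGA →ₐ[ℝ] Matrix (Fin 4) (Fin 4) ℂ :=
  CliffordAlgebra.lift Qcga ⟨diracLinear, fun v => by
    rw [Qcga_apply]
    ext i j
    fin_cases i <;> fin_cases j <;>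
      simp [diracLinear, Matrix.mul_apply, Fin.sum_univ_four, Matrix.algebraMap_matrix_apply] <;>
      ring_nf <;> simp⟩

set_option maxHeartbeats 1000000 in
theorem dirac_evenGen : dirac ∘ evenGen =
    ![!![Complex.I, 0, 0, 0; 0, -Complex.I, 0, 0; 0, 0, Complex.I, 0; 0, 0, 0, -Complex.I],
      !![0, -1, 0, 0; 1, 0, 0, 0; 0, 0, 0, -1; 0, 0, 1, 0],
      !![0, 0, 0, 1; 0, 0, 1, 0; 0, -1, 0, 0; -1, 0, 0, 0],
      !![0, 0, 0, 1; 0, 0, 1, 0; 0, 1, 0, 0; 1, 0, 0, 0]] := by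
  funext k
  ext i j
  fin_cases k <;> fin_cases i <;> fin_cases j <;>
    simp [dirac, evenGen, eCGA, diracLinear, Matrix.mul_apply, Fin.sum_univ_four]

set_option maxHeartbeats 1000000 in
theorem dirac_wordSum_evenGen (c : Fin 16 → ℝ) : dirac (wordSum evenGen c) =
    !![⟨c 0 + c 10, c 1 + c 13⟩, ⟨-c 2 - c 14, -c 5 - c 15⟩, ⟨-c 8 - c 9, -c 11 - c 12⟩,
        ⟨c 3 + c 4, c 6 + c 7⟩;
      ⟨c 2 + c 14, -c 5 - c 15⟩, ⟨c 0 + c 10, -c 1 - c 13⟩, ⟨c 3 + c 4, -c 6 - c 7⟩,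
        ⟨c 8 + c 9, -c 11 - c 12⟩;
      ⟨c 8 - c 9, c 11 - c 12⟩, ⟨c 4 - c 3, c 7 - c 6⟩, ⟨c 0 - c 10, c 1 - c 13⟩,
        ⟨c 14 - c 2, c 15 - c 5⟩;
      ⟨c 4 - c 3, c 6 - c 7⟩, ⟨c 9 - c 8, c 11 - c 12⟩, ⟨c 2 - c 14, c 15 - c 5⟩,
        ⟨c 0 - c 10, c 13 - c 1⟩] := by
  rw [map_wordSum, dirac_evenGen]
  ext i j
  fin_cases i <;> fin_cases j <;> simp [wordSum, Complex.ext_iff] <;>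
    constructor <;> ring

theorem eq_zero_of_wordSum_evenGen_eq_algebraMap {c : Fin 16 → ℝ} {r : ℝ}
    (h : wordSum evenGen c = algebraMap ℝ CGA r) (i : Fin 16) (hi : i ≠ 0) : c i = 0 := by
  have h' := congrArg dirac h
  rw [dirac_wordSum_evenGen, AlgHom.commutes] at h'
  have e := fun i j => congrFun (congrFun h' i) j
  simp [Fin.forall_fin_succ, Matrix.algebraMap_matrix_apply, Complex.ext_iff] at e
  fin_cases i <;> first | exact absurd rfl hi | (dsimp; linarith)

theorem coeff_of_commute_null {c : Fin 16 → ℝ} (h0 : ∀ i, 11 ≤ i → c i = 0)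
    (h : Commute (wordSum evenGen c) (eCGA 2 * eCGA 3 + eCGA 2 * eCGA 4)) :
    c 2 = 0 ∧ c 4 = c 3 ∧ c 5 = 0 ∧ c 7 = c 6 ∧ c 9 = c 8 ∧ c 10 = 0 := by
  have hn : eCGA 2 * eCGA 3 + eCGA 2 * eCGA 4 =
      wordSum evenGen ![0, 0, 0, 0, 0, 0, 0, 0, -1, -1, 0, 0, 0, 0, 0, 0] := by
    simp [wordSum, evenGen_mul]
  have h' := congrArg dirac h.eq
  rw [hn, map_mul, map_mul, dirac_wordSum_evenGen, dirac_wordSum_evenGen] at h'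
  have e := fun i j => congrFun (congrFun h' i) j
  simp [Fin.forall_fin_succ, Matrix.mul_apply, Fin.sum_univ_four, Complex.ext_iff, h0] at e
  refine ⟨?_, ?_, ?_, ?_, ?_, ?_⟩ <;> linarith

theorem coeff_of_mul_reverse {c : Fin 16 → ℝ} (h0 : ∀ i, 11 ≤ i → c i = 0)
    (hc : c 2 = 0 ∧ c 4 = c 3 ∧ c 5 = 0 ∧ c 7 = c 6 ∧ c 9 = c 8 ∧ c 10 = 0) {r : ℝ}
    (h : wordSum evenGen c * CliffordAlgebra.reverse (wordSum evenGen c) = algebraMap ℝ CGA r) :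
    c 1 = 0 ∨ c 8 = 0 := by
  obtain ⟨h2, h4, h5, h7, h9, h10⟩ := hc
  have hrev : CliffordAlgebra.reverse (wordSum evenGen c) =
      wordSum evenGen (Pi.single 0 (2 * c 0) + (-1 : ℝ) • c) := by
    rw [wordSum_add, wordSum_smul, neg_one_smul, ← sub_eq_add_neg, eq_sub_iff_add_eq',
      wordSum_evenGen_add_reverse]
    congr 1
    funext i
    fin_cases i <;> simp [h0]
  have h' := congrArg dirac h
  rw [hrev, map_mul, AlgHom.commutes, dirac_wordSum_evenGen, dirac_wordSum_evenGen] at h'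
  have e := congrFun (congrFun h' 0) 2
  simp [Matrix.mul_apply, Fin.sum_univ_four, Complex.ext_iff, h0, h2, h4, h5, h7, h9, h10,
    Matrix.algebraMap_matrix_apply] at e
  rw [← mul_eq_zero]
  linarith

/-- if `x ∈ CGA₊` satisfies `x + x̃ ∈ ℝ`, `x·x̃ ∈ ℝ` and `x` commutes
with `e₃₊ + e₃₋`, then `x` lies in the real span of
`{1, e₁₊+e₁₋, e₂₊+e₂₋, e₃₊+e₃₋}` or in the real span of `{1, e₁₂, e₁₊+e₁₋, e₂₊+e₂₋}`. -/
theorem stmt10 (x : CGA) (hx : x ∈ CliffordAlgebra.even Qcga)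
    (h1 : ∃ r : ℝ, x + CliffordAlgebra.reverse x = algebraMap ℝ CGA r)
    (h2 : ∃ r : ℝ, x * CliffordAlgebra.reverse x = algebraMap ℝ CGA r)
    (hcomm : x * (eCGA 2 * eCGA 3 + eCGA 2 * eCGA 4)
      = (eCGA 2 * eCGA 3 + eCGA 2 * eCGA 4) * x) :
    x ∈ Submodule.span ℝ
        ({1, eCGA 0 * eCGA 3 + eCGA 0 * eCGA 4, eCGA 1 * eCGA 3 + eCGA 1 * eCGA 4,
          eCGA 2 * eCGA 3 + eCGA 2 * eCGA 4} : Set CGA) ∨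
    x ∈ Submodule.span ℝ
        ({1, eCGA 0 * eCGA 1, eCGA 0 * eCGA 3 + eCGA 0 * eCGA 4,
          eCGA 1 * eCGA 3 + eCGA 1 * eCGA 4} : Set CGA) := by
  obtain ⟨c, rfl⟩ := exists_wordSum_of_mem_even x hx
  obtain ⟨r, hr⟩ := h1
  obtain ⟨s, hs⟩ := h2
  rw [wordSum_evenGen_add_reverse] at hr
  have h0 : ∀ i, 11 ≤ i → c i = 0 := by
    intro i hi
    have h := eq_zero_of_wordSum_evenGen_eq_algebraMap hr i (by rintro rfl; simp at hi)
    fin_cases i <;> simp at hi h ⊢ <;> exact h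
  have hc := coeff_of_commute_null h0 hcomm
  have h18 := coeff_of_mul_reverse h0 hc hs
  obtain ⟨h2, h4, h5, h7, h9, h10⟩ := hc
  have hx : wordSum evenGen c = c 0 • 1 + c 1 • (eCGA 0 * eCGA 1)
      + c 3 • (eCGA 0 * eCGA 3 + eCGA 0 * eCGA 4)
      + (-c 6) • (eCGA 1 * eCGA 3 + eCGA 1 * eCGA 4)
      + (-c 8) • (eCGA 2 * eCGA 3 + eCGA 2 * eCGA 4) := by
    simp only [wordSum, evenGen_mul, h0 _ le_rfl, h0 12 (by decide), h0 13 (by decide),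
      h0 14 (by decide), h0 15 (by decide), h2, h4, h5, h7, h9, h10]
    simp [evenGen]
    module
  rw [hx]
  refine h18.imp (fun h => ?_) fun h => ?_ <;>
  · simp only [h, zero_smul, neg_zero, add_zero]
    refine add_mem (add_mem (add_mem ?_ ?_) ?_) ?_ <;>
      exact Submodule.smul_mem _ _ (Submodule.subset_span (by simp))
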